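/- arXiv:2307.15358 — 5 statements merged into one kernel-verified Lean document; each statement's English description precedes it below -/
import Mathlib

section
/- Let L be a type of formulas with a variable function var : L → Set V (each var(α) finite) where V is infinite, and suppose every variable is a formula: there is an injection ι : V → L with var(ι q) = {q} for each q ∈ V. Let ⊢ be a consequence relation on L. If α, β ∈ L are such that {α, β} ⊢ᵖˡ γ for every γ ∈ L, then var(α) = ∅ or var(β) = ∅. Moreover, if additionally ∅ ⊬ ι q for every q ∈ V, then the same conclusion holds for ⊢ˡ: if {α, β} ⊢ˡ γ for every γ ∈ L, then var(α) = ∅ or var(β) = ∅. -/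
/-- The set of variables occurring in a set of formulas. -/
def varSet {L V : Type*} (var : L → Set V) (Γ : Set L) : Set V := ⋃ α ∈ Γ, var α

/-- The left variable inclusion companion of a consequence relation. -/
def LVI {L V : Type*} (var : L → Set V) (vdash : Set L → L → Prop)
    (Γ : Set L) (α : L) : Prop :=
  ∃ Δ ⊆ Γ, varSet var Δ ⊆ var α ∧ vdash Δ α

/-- The pure left variable inclusion companion of a consequence relation. -/
def PLVI {L V : Type*} (var : L → Set V) (vdash : Set L → L → Prop)
    (Γ : Set L) (α : L) : Prop :=
  ∃ Δ ⊆ Γ, Δ.Nonempty ∧ varSet var Δ ⊆ var α ∧ vdash Δ α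

/-- If `{α, β}` entails, in the pure left variable inclusion companion, a formula whose only
variable is fresh for `α` and `β`, then `α` or `β` is a constant. -/
theorem PLVI.var_eq_empty_or_of_fresh {L V : Type*} {var : L → Set V}
    {vdash : Set L → L → Prop} {α β γ : L} {q : V} (hγ : var γ = {q})
    (hα : q ∉ var α) (hβ : q ∉ var β) (h : PLVI var vdash {α, β} γ) :
    var α = ∅ ∨ var β = ∅ := by
  obtain ⟨Δ, hΔ, ⟨δ, hδ⟩, hvar, -⟩ := h
  have hsub : var δ ⊆ {q} := hγ ▸ (Set.subset_biUnion_of_mem (u := var) hδ).trans hvar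
  rcases hΔ hδ with rfl | rfl
  · exact Or.inl ((Set.subset_singleton_iff_eq.1 hsub).resolve_right
      fun h => hα (h ▸ Set.mem_singleton q))
  · exact Or.inr ((Set.subset_singleton_iff_eq.1 hsub).resolve_right
      fun h => hβ (h ▸ Set.mem_singleton q))

/-- The two companions agree on conclusions that are not theorems. -/
theorem LVI.plvi {L V : Type*} {var : L → Set V} {vdash : Set L → L → Prop}
    {Γ : Set L} {γ : L} (hγ : ¬ vdash ∅ γ) (h : LVI var vdash Γ γ) :
    PLVI var vdash Γ γ := by
  obtain ⟨Δ, hΔ, hvar, hd⟩ := h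
  exact ⟨Δ, hΔ, Set.nonempty_iff_ne_empty.2 fun h => hγ (h ▸ hd), hvar, hd⟩

/-- If a pair `{α, β}` trivializes the pure left variable inclusion companion, then
`α` or `β` is a constant; the same holds for the left variable inclusion companion
provided no variable is a theorem of `⊢`. -/
theorem plvi_trivial_pair_constant {L V : Type*} [Infinite V]
    (var : L → Set V) (hfin : ∀ α : L, (var α).Finite)
    (ι : V → L) (hι : Function.Injective ι) (hιvar : ∀ q : V, var (ι q) = {q})
    (vdash : Set L → L → Prop) (α β : L) :
    ((∀ γ : L, PLVI var vdash {α, β} γ) → var α = ∅ ∨ var β = ∅) ∧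
    ((∀ q : V, ¬ vdash ∅ (ι q)) →
      (∀ γ : L, LVI var vdash {α, β} γ) → var α = ∅ ∨ var β = ∅) := by
  obtain ⟨q, hq⟩ := ((hfin α).union (hfin β)).exists_notMem
  rw [Set.mem_union, not_or] at hq
  exact ⟨fun h => (h (ι q)).var_eq_empty_or_of_fresh (hιvar q) hq.1 hq.2,
    fun hthm h => ((h (ι q)).plvi (hthm q)).var_eq_empty_or_of_fresh (hιvar q) hq.1 hq.2⟩
end

section
/- Let L be a type of formulas with a variable function var : L → Set V (each var(α) finite) where V is infinite, with variables embedded via an injection ι : V → L satisfying var(ι q) = {q}, and let ⊢ be a consequence relation on L. If var(φ) ≠ ∅ for every φ ∈ L, then the pure left variable inclusion companion ⊢ᵖˡ is NF-paraconsistent: there exists α ∈ L such that for every β ∈ L there is some γ ∈ L with {α, β} ⊬ᵖˡ γ. Moreover, if additionally ∅ ⊬ ι q for every q ∈ V, then the left variable inclusion companion ⊢ˡ is also NF-paraconsistent. -/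
/-- For any two formulas some variable is fresh, and a set of nonconstant formulas among the two
whose variables lie in that fresh variable is empty. -/
theorem exists_variable_forall_subset_pair_eq_empty {L V : Type*} [Infinite V]
    (var : L → Set V) (hfin : ∀ α : L, (var α).Finite)
    (ι : V → L) (hιvar : ∀ q : V, var (ι q) = {q})
    (hvar : ∀ φ : L, var φ ≠ ∅) (α β : L) :
    ∃ q : V, ∀ Δ ⊆ ({α, β} : Set L), varSet var Δ ⊆ var (ι q) → Δ = ∅ := by
  obtain ⟨q, hq⟩ := ((hfin α).union (hfin β)).exists_notMem
  refine ⟨q, fun Δ hΔ hsub => Set.eq_empty_of_forall_notMem fun φ hφ => ?_⟩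
  obtain ⟨x, hx⟩ := Set.nonempty_iff_ne_empty.mpr (hvar φ)
  have hxq : x = q := by
    simpa [hιvar] using hsub (Set.mem_biUnion hφ hx)
  subst hxq
  rcases hΔ hφ with rfl | rfl
  · exact hq (Or.inl hx)
  · exact hq (Or.inr hx)

/-- If no formula is a constant, then the pure left variable inclusion companion is
NF-paraconsistent; if moreover no variable is a theorem of `⊢`, then the left variable
inclusion companion is NF-paraconsistent as well. -/
theorem plvi_nf_paraconsistent_of_no_constants {L V : Type*} [Infinite V]
    (var : L → Set V) (hfin : ∀ α : L, (var α).Finite)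
    (ι : V → L) (hι : Function.Injective ι) (hιvar : ∀ q : V, var (ι q) = {q})
    (vdash : Set L → L → Prop)
    (hvar : ∀ φ : L, var φ ≠ ∅) :
    (∃ α : L, ∀ β : L, ∃ γ : L, ¬ PLVI var vdash {α, β} γ) ∧
    ((∀ q : V, ¬ vdash ∅ (ι q)) →
      ∃ α : L, ∀ β : L, ∃ γ : L, ¬ LVI var vdash {α, β} γ) := by
  obtain ⟨p⟩ : Nonempty V := inferInstance
  have fresh := exists_variable_forall_subset_pair_eq_empty var hfin ι hιvar hvar (ι p)
  refine ⟨⟨ι p, fun β => ?_⟩, fun hthm => ⟨ι p, fun β => ?_⟩⟩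
  all_goals
    obtain ⟨q, hq⟩ := fresh β
    refine ⟨ι q, ?_⟩
  · rintro ⟨Δ, hΔ, hne, hsub, -⟩
    exact hne.ne_empty (hq Δ hΔ hsub)
  · rintro ⟨Δ, hΔ, hsub, hd⟩
    exact hthm q (hq Δ hΔ hsub ▸ hd)
end

section
/- Let L be a type of formulas with a variable function var : L → Set V (each var(α) finite) where V is infinite, with variables embedded via an injection ι : V → L satisfying var(ι q) = {q}, and let ⊢ be a transitive consequence relation on L (if every element of Σ is derivable from Γ and Σ ⊢ α, then Γ ⊢ α). If there is no falsity constant for ⊢, i.e. no β ∈ L with var(β) = ∅ such that {β} ⊢ γ for all γ ∈ L, then the pure left variable inclusion companion ⊢ᵖˡ is NF-paraconsistent: there exists α ∈ L such that for every β ∈ L there is some γ ∈ L with {α, β} ⊬ᵖˡ γ. -/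
/-- If the premises of a pure companion derivation are `α` and `β`, and `α` has a variable missing
from the conclusion, then only `β` is used. -/
theorem PLVI.of_notMem_var {L V : Type*} {var : L → Set V} {vdash : Set L → L → Prop}
    {α β γ : L} {p : V} (hp : p ∈ var α) (hpγ : p ∉ var γ) (h : PLVI var vdash {α, β} γ) :
    var β ⊆ var γ ∧ vdash {β} γ := by
  obtain ⟨Δ, hΔ, hne, hvar, hd⟩ := h
  have hsub : ∀ σ ∈ Δ, var σ ⊆ var γ := fun σ hσ _ hx => hvar (Set.mem_biUnion hσ hx)
  have hΔβ : Δ = {β} := hne.subset_singleton_iff.mp fun σ hσ =>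
    (hΔ hσ).resolve_left fun hσα => hpγ (hsub σ hσ (hσα ▸ hp))
  subst hΔβ
  exact ⟨hsub β rfl, hd⟩

/-- If `⊢` is transitive and has no falsity constant, then its pure left variable
inclusion companion is NF-paraconsistent. -/
theorem plvi_nf_paraconsistent_of_transitive {L V : Type*} [Infinite V]
    (var : L → Set V) (hfin : ∀ α : L, (var α).Finite)
    (ι : V → L) (hι : Function.Injective ι) (hιvar : ∀ q : V, var (ι q) = {q})
    (vdash : Set L → L → Prop)
    (htrans : ∀ (Γ Δ : Set L) (α : L), (∀ σ ∈ Δ, vdash Γ σ) → vdash Δ α → vdash Γ α)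
    (hnofalsity : ¬ ∃ β : L, var β = ∅ ∧ ∀ γ : L, vdash {β} γ) :
    ∃ α : L, ∀ β : L, ∃ γ : L, ¬ PLVI var vdash {α, β} γ := by
  by_contra! hcon
  choose f hf using fun p : V => hcon (ι p)
  have hpl : ∀ {p : V} {γ : L}, p ∉ var γ → var (f p) ⊆ var γ ∧ vdash {f p} γ :=
    fun {p γ} hp => (hf p γ).of_notMem_var (by simp [hιvar]) hp
  have hempty : ∀ p, var (f p) = ∅ := by
    intro p
    obtain ⟨q, hq⟩ := ((hfin (f p)).insert p).exists_notMem
    have hpq : p ∉ var (ι q) := by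
      rw [hιvar]
      rintro rfl
      exact hq (Set.mem_insert _ _)
    refine Set.eq_empty_of_forall_notMem fun x hx => hq (Set.mem_insert_of_mem _ ?_)
    have hxq := (hpl hpq).1 hx
    rw [hιvar] at hxq
    exact hxq ▸ hx
  have hff : ∀ p r, vdash {f p} (f r) := fun p r => (hpl (by simp [hempty])).2
  obtain ⟨p, r, hpr⟩ := exists_pair_ne V
  have hfp : vdash {f p} (ι p) := by
    refine htrans _ {f r} _ ?_ (hpl (by simpa [hιvar] using hpr.symm)).2
    rintro σ rfl
    exact hff p r
  refine hnofalsity ⟨f p, hempty p, fun γ => ?_⟩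
  obtain ⟨Δ, hΔ, -, -, hd⟩ := hf p γ
  refine htrans _ Δ _ (fun σ hσ => ?_) hd
  rcases hΔ hσ with rfl | rfl
  · exact hfp
  · exact hff p p
end

section
/- Let L be a type of formulas with a variable function var : L → Set V (each var(α) finite) where V is infinite, with variables embedded via an injection ι : V → L satisfying var(ι q) = {q}, and let ⊢ be any consequence relation on L. Then the pure right variable inclusion companion ⊢ᵖʳ, defined by Γ ⊢ᵖʳ α iff Γ ⊢ α and var(α) ⊆ var(Γ), is NF-paraconsistent: there exists α ∈ L such that for every β ∈ L there is some γ ∈ L with {α, β} ⊬ᵖʳ γ. -/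
/-- The pure right variable inclusion companion of a consequence relation. -/
def PRVI {L V : Type*} (var : L → Set V) (vdash : Set L → L → Prop)
    (Γ : Set L) (α : L) : Prop :=
  vdash Γ α ∧ var α ⊆ varSet var Γ

/-- The pure right variable inclusion companion of any consequence relation is
NF-paraconsistent. -/
theorem prvi_nf_paraconsistent {L V : Type*} [Infinite V]
    (var : L → Set V) (hfin : ∀ α : L, (var α).Finite)
    (ι : V → L) (hι : Function.Injective ι) (hιvar : ∀ q : V, var (ι q) = {q})
    (vdash : Set L → L → Prop) :
    ∃ α : L, ∀ β : L, ∃ γ : L, ¬ PRVI var vdash {α, β} γ := by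
  obtain ⟨p⟩ : Nonempty V := inferInstance
  refine ⟨ι p, fun β => ?_⟩
  obtain ⟨q, hq⟩ := ((hfin (ι p)).union (hfin β)).exists_notMem
  refine ⟨ι q, fun h => hq ?_⟩
  simpa [varSet, hιvar] using h.2
end

section
/- Let L be a nonempty type, C : Set L → Set L a monotonic and transitive consequence operator, and conj : L → L → L a binary operation satisfying the elimination rule (∧E): α ∈ C({conj α β}) and β ∈ C({conj α β}) for all α, β, and such that conj φ φ ≠ φ for every φ ∈ L. If C is finitely trivializable (there exists a finite Γ with C(Γ) = Set.univ), then spECQ holds in C (for every Γ ⊊ Set.univ there exists α with Γ ∪ {α} ⊊ Set.univ and C(Γ ∪ {α}) = Set.univ), pfECQ1 holds in C (for every Γ ⊊ Set.univ there exists Δ ⊊ Set.univ with Γ ⊆ Δ and C(Δ) = Set.univ), and gECQ holds in C (for every α there exists β with C({α, β}) = Set.univ). -/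
/-- With conjunction elimination, every finite set is contained in the consequences of a single
formula. -/
theorem exists_subset_consequence_singleton {L : Type*} [Nonempty L] {C : Set L → Set L}
    (htrans : ∀ Γ Δ : Set L, Δ ⊆ C Γ → C Δ ⊆ C Γ) {conj : L → L → L}
    (hconj : ∀ α β : L, α ∈ C {conj α β} ∧ β ∈ C {conj α β}) {Γ : Set L} (hΓ : Γ.Finite) :
    ∃ σ : L, Γ ⊆ C {σ} := by
  induction Γ, hΓ using Set.Finite.induction_on with
  | empty => exact ⟨Classical.arbitrary L, Set.empty_subset _⟩
  | @insert a s _ _ ih =>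
    obtain ⟨σ, hσ⟩ := ih
    refine ⟨conj a σ, Set.insert_subset (hconj a σ).1 (hσ.trans (htrans _ _ ?_))⟩
    exact Set.singleton_subset_iff.2 (hconj a σ).2

/-- For a monotonic and transitive consequence operator with a conjunction satisfying
(∧E) and `conj φ φ ≠ φ`, finite trivializability implies spECQ, pfECQ1, and gECQ. -/
theorem finitely_trivializable_implies_specq_pfecq_gecq {L : Type*} [Nonempty L]
    (C : Set L → Set L)
    (hmono : ∀ ⦃Γ Δ : Set L⦄, Γ ⊆ Δ → C Γ ⊆ C Δ)
    (htrans : ∀ Γ Δ : Set L, Δ ⊆ C Γ → C Δ ⊆ C Γ)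
    (conj : L → L → L)
    (hconj : ∀ α β : L, α ∈ C {conj α β} ∧ β ∈ C {conj α β})
    (hne : ∀ φ : L, conj φ φ ≠ φ)
    (hfin : ∃ Γ : Set L, Γ.Finite ∧ C Γ = Set.univ) :
    (∀ Γ : Set L, Γ ⊂ Set.univ →
      ∃ α : L, Γ ∪ {α} ⊂ Set.univ ∧ C (Γ ∪ {α}) = Set.univ) ∧
    (∀ Γ : Set L, Γ ⊂ Set.univ →
      ∃ Δ : Set L, Δ ⊂ Set.univ ∧ Γ ⊆ Δ ∧ C Δ = Set.univ) ∧
    (∀ α : L, ∃ β : L, C {α, β} = Set.univ) := by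
  obtain ⟨Γ₀, hΓ₀, hC⟩ := hfin
  obtain ⟨σ, hσ⟩ := exists_subset_consequence_singleton htrans hconj hΓ₀
  have hσu : C {σ} = Set.univ := Set.univ_subset_iff.1 (hC ▸ htrans _ _ hσ)
  have hτu : C {conj σ σ} = Set.univ :=
    Set.univ_subset_iff.1
      (hσu ▸ htrans _ _ (Set.singleton_subset_iff.2 (hconj σ σ).1))
  have explodes_of_mem {τ : L} (hτ : C {τ} = Set.univ) {Δ : Set L} (h : τ ∈ Δ) :
      C Δ = Set.univ :=
    Set.univ_subset_iff.1 (hτ ▸ hmono (Set.singleton_subset_iff.2 h))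
  have spECQ : ∀ Γ : Set L, Γ ⊂ Set.univ →
      ∃ α : L, Γ ∪ {α} ⊂ Set.univ ∧ C (Γ ∪ {α}) = Set.univ := by
    intro Γ hΓ
    obtain ⟨x, hx⟩ := (Set.ne_univ_iff_exists_notMem Γ).1 hΓ.ne
    obtain ⟨α, hα, hxα⟩ : ∃ α, C {α} = Set.univ ∧ x ≠ α := by
      by_cases h : x = σ
      · exact ⟨conj σ σ, hτu, h ▸ (hne x).symm⟩
      · exact ⟨σ, hσu, h⟩
    refine ⟨α, Set.ssubset_univ_iff.2 ((Set.ne_univ_iff_exists_notMem _).2 ⟨x, ?_⟩),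
      explodes_of_mem hα (Or.inr rfl)⟩
    rintro (h | h)
    exacts [hx h, hxα h]
  refine ⟨spECQ, fun Γ hΓ => ?_, fun α => ⟨σ, explodes_of_mem hσu (Or.inr rfl)⟩⟩
  obtain ⟨α, hα, hCα⟩ := spECQ Γ hΓ
  exact ⟨Γ ∪ {α}, hα, Set.subset_union_left, hCα⟩
end
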